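/- arXiv:1605.08683 — 2 statements merged into one kernel-verified Lean document; each statement's English description precedes it below -/
import Mathlib

section
/- Let α ∈ ℝ with sin α ≠ 0 and let f(x) = p(x) e^{-x²} where p is a complex polynomial. Then for every x ∈ ℝ, F_{-α}(F_α f)(x) = f(x); that is, the inverse of the α-angle fractional Fourier transform is the (-α)-angle fractional Fourier transform. -/
/-!
Expanding the phase writes the `α`-angle transform as chirp multiplication, then the ordinary
Fourier transform evaluated at `x / (π sin α)`, then chirp multiplication again. The chirps of
angles `α` and `-α` are inverse to each other, so `F_{-α} ∘ F_α` reduces to Fourier inversion, and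
the normalizing constants cancel the Jacobian `π |sin α|` of the dilation. Since a chirp is
unimodular, Fourier inversion applies as soon as `f` and `F_α f` are integrable. For a polynomial
times a Gaussian, multiplication by a chirp only changes the imaginary part of the Gaussian's
exponent, so the chirped function is still Schwartz.
-/

open MeasureTheory Complex

/-- The α-angle fractional Fourier transform (for sin α ≠ 0). The square root
`(1 - i cot α) ^ (1/2)` is the principal one, whose argument lies in (-π/2, π/2]. -/
noncomputable def FrFT (α : ℝ) (f : ℝ → ℂ) (x : ℝ) : ℂ :=
  ((1 - Complex.I * Real.cot α) ^ ((1:ℂ)/2) / (Real.sqrt Real.pi : ℂ)) *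
    Complex.exp (Complex.I * (x:ℂ)^2 * Real.cot α) *
    ∫ t : ℝ, Complex.exp (-2 * Complex.I * ((x:ℂ) * t * (((Real.sin α)⁻¹ : ℝ) : ℂ)
      - ((Real.cot α : ℂ) / 2) * (t:ℂ)^2)) * f t

open Filter Polynomial Topology
open scoped ComplexConjugate ContDiff FourierTransform SchwartzMap

section PolyGaussian

/-- The polynomial multiple `q(t) e^{-b t²}` of a Gaussian, with complex parameter `b` so that the
family is stable under multiplication by chirps. -/
noncomputable def polyGaussian (b : ℂ) (q : ℂ[X]) (t : ℝ) : ℂ :=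
  q.eval (t : ℂ) * cexp (-b * (t : ℂ) ^ 2)

/-- The derivative conjugated by `e^{-b t²}`: the operator on polynomial factors that corresponds to
differentiating `polyGaussian b q`. -/
noncomputable def gaussianDerivative (b : ℂ) (q : ℂ[X]) : ℂ[X] :=
  derivative q - C (2 * b) * X * q

lemma contDiff_polyGaussian (b : ℂ) (q : ℂ[X]) : ContDiff ℝ ∞ (polyGaussian b q) := by
  have hentire : Differentiable ℂ fun z : ℂ => q.eval z * cexp (-b * z ^ 2) :=
    q.differentiable.mul (by fun_prop)
  exact (hentire.contDiff.restrict_scalars ℝ).comp ofRealCLM.contDiff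

lemma hasDerivAt_polyGaussian (b : ℂ) (q : ℂ[X]) (t : ℝ) :
    HasDerivAt (polyGaussian b q) (polyGaussian b (gaussianDerivative b q) t) t := by
  have hexponent : HasDerivAt (fun z : ℂ => -b * z ^ 2) (-b * (2 * t)) (t : ℂ) := by
    simpa using (hasDerivAt_pow 2 (t : ℂ)).const_mul (-b)
  convert! ((q.hasDerivAt (t : ℂ)).mul hexponent.cexp).comp_ofReal using 1
  simp only [polyGaussian, gaussianDerivative, eval_sub, eval_mul, eval_C, eval_X]
  ring

lemma iteratedDeriv_polyGaussian (b : ℂ) (q : ℂ[X]) (n : ℕ) :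
    iteratedDeriv n (polyGaussian b q) = polyGaussian b ((gaussianDerivative b)^[n] q) := by
  induction n with
  | zero => rfl
  | succ n ih =>
    rw [iteratedDeriv_succ, ih, Function.iterate_succ_apply']
    exact funext fun t => (hasDerivAt_polyGaussian b _ t).deriv

lemma tendsto_polyGaussian_cocompact {b : ℂ} (hb : 0 < b.re) (q : ℂ[X]) :
    Tendsto (polyGaussian b q) (cocompact ℝ) (𝓝 0) := by
  induction q using Polynomial.induction_on' with
  | add p q hp hq =>
    have hadd : polyGaussian b (p + q) = fun t => polyGaussian b p t + polyGaussian b q t :=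
      funext fun t => by simp only [polyGaussian, eval_add, add_mul]
    simpa only [hadd, add_zero] using hp.add hq
  | monomial n a =>
    rw [tendsto_zero_iff_norm_tendsto_zero]
    have hdecay := (tendsto_rpow_abs_mul_exp_neg_mul_sq_cocompact hb n).const_mul ‖a‖
    simpa only [polyGaussian, eval_monomial, norm_mul, norm_pow, norm_real, Real.norm_eq_abs,
      norm_cexp_neg_mul_sq, mul_assoc, Real.rpow_natCast, mul_zero] using hdecay

lemma exists_norm_polyGaussian_le {b : ℂ} (hb : 0 < b.re) (q : ℂ[X]) :
    ∃ M, ∀ t, ‖polyGaussian b q t‖ ≤ M := by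
  let g : ZeroAtInftyContinuousMap ℝ ℂ :=
    { toFun := polyGaussian b q
      continuous_toFun := (contDiff_polyGaussian b q).continuous
      zero_at_infty' := tendsto_polyGaussian_cocompact hb q }
  obtain ⟨M, hM⟩ := g.isBounded_range.exists_norm_le
  exact ⟨M, fun t => hM _ ⟨t, rfl⟩⟩

/-- `polyGaussian b q` as a Schwartz function, for a decaying Gaussian. -/
noncomputable def polyGaussianSchwartz {b : ℂ} (hb : 0 < b.re) (q : ℂ[X]) : 𝓢(ℝ, ℂ) where
  toFun := polyGaussian b q
  smooth' := contDiff_polyGaussian b q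
  decay' k n := by
    -- The weight `t ^ k` is absorbed into the polynomial factor.
    obtain ⟨M, hM⟩ := exists_norm_polyGaussian_le hb (X ^ k * (gaussianDerivative b)^[n] q)
    refine ⟨M, fun t => le_of_eq_of_le ?_ (hM t)⟩
    rw [norm_iteratedFDeriv_eq_norm_iteratedDeriv, iteratedDeriv_polyGaussian]
    simp [polyGaussian, mul_assoc]

lemma integrable_polyGaussian {b : ℂ} (hb : 0 < b.re) (q : ℂ[X]) :
    Integrable (polyGaussian b q) :=
  (polyGaussianSchwartz hb q).integrable

lemma integrable_fourier_polyGaussian {b : ℂ} (hb : 0 < b.re) (q : ℂ[X]) :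
    Integrable (𝓕 (polyGaussian b q)) :=
  (𝓕 (polyGaussianSchwartz hb q)).integrable

end PolyGaussian

section Chirp

/-- The chirp `e^{i c t²}` of rate `c`. -/
noncomputable def chirp (c t : ℝ) : ℂ :=
  cexp (I * c * (t : ℂ) ^ 2)

lemma continuous_chirp (c : ℝ) : Continuous (chirp c) := by
  unfold chirp
  fun_prop

lemma norm_chirp (c t : ℝ) : ‖chirp c t‖ = 1 := by
  have hphase : I * c * (t : ℂ) ^ 2 = ((c * t ^ 2 : ℝ) : ℂ) * I := by push_cast; ring
  rw [chirp, hphase, norm_exp_ofReal_mul_I]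

lemma chirp_neg_mul_chirp (c t : ℝ) : chirp (-c) t * chirp c t = 1 := by
  rw [chirp, chirp, ← Complex.exp_add, ← Complex.exp_zero]
  push_cast
  ring_nf

lemma integrable_chirp_mul {f : ℝ → ℂ} (hf : Integrable f) (c : ℝ) :
    Integrable fun t => chirp c t * f t :=
  hf.bdd_mul (continuous_chirp c).aestronglyMeasurable (ae_of_all _ fun t => (norm_chirp c t).le)

lemma integrable_chirp_mul_iff {f : ℝ → ℂ} {c : ℝ} :
    Integrable (fun t => chirp c t * f t) ↔ Integrable f := by
  refine ⟨fun h => ?_, fun h => integrable_chirp_mul h c⟩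
  simpa only [← mul_assoc, chirp_neg_mul_chirp, one_mul] using integrable_chirp_mul h (-c)

lemma chirp_mul_polyGaussian (c : ℝ) (b : ℂ) (q : ℂ[X]) (t : ℝ) :
    chirp c t * polyGaussian b q t = polyGaussian (b - I * c) q t := by
  rw [chirp, polyGaussian, polyGaussian, mul_left_comm, ← Complex.exp_add]
  ring_nf

end Chirp

section FourierInv

variable {V E : Type*} [NormedAddCommGroup V] [InnerProductSpace ℝ V] [MeasurableSpace V]
  [BorelSpace V] [FiniteDimensional ℝ V] [NormedAddCommGroup E] [NormedSpace ℂ E]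

lemma fourierInv_const_smul (c : ℂ) (f : V → E) (w : V) :
    𝓕⁻ (fun v => c • f v) w = c • 𝓕⁻ f w := by
  simp only [Real.fourierInv_eq', smul_comm _ c, integral_smul]

lemma fourierInv_comp_smul (f : V → E) (a : ℝ) (w : V) :
    𝓕⁻ (fun v => f (a • v)) (a • w) = |(a ^ Module.finrank ℝ V)⁻¹| • 𝓕⁻ f w := by
  simp only [Real.fourierInv_eq', ← Measure.integral_comp_smul, real_inner_smul_left,
    real_inner_smul_right]

end FourierInv

section Normalization

/-- The constant `√(1 - i cot α) / √π` normalizing the `α`-angle fractional Fourier transform. -/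
noncomputable def frftConst (α : ℝ) : ℂ :=
  (1 - I * Real.cot α) ^ ((1 : ℂ) / 2) / (√Real.pi : ℂ)

lemma real_cot_neg (α : ℝ) : Real.cot (-α) = -Real.cot α := by
  rw [Real.cot_eq_cos_div_sin, Real.cot_eq_cos_div_sin, Real.cos_neg, Real.sin_neg, div_neg]

-- `simp` cannot be used directly when `c = Real.cot α`: it turns the cast into a complex cotangent.
lemma re_sub_I_mul_ofReal (z : ℂ) (c : ℝ) : (z - I * c).re = z.re := by
  simp

lemma norm_one_sub_I_mul_cot {α : ℝ} (hα : Real.sin α ≠ 0) :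
    ‖1 - I * (Real.cot α : ℂ)‖ = |Real.sin α|⁻¹ := by
  have hnormSq : normSq (1 - I * (Real.cot α : ℂ)) = 1 + Real.cot α ^ 2 := by
    simp [normSq_apply, -ofReal_cot, sq]
  rw [← sq_eq_sq₀ (norm_nonneg _) (by positivity), inv_pow, sq_abs, ← normSq_eq_norm_sq, hnormSq,
    Real.cot_eq_cos_div_sin]
  field_simp
  exact Real.sin_sq_add_cos_sq α

lemma cpow_half_mul_conj_cpow_half {z : ℂ} (hz : z.arg ≠ Real.pi) :
    z ^ ((1 : ℂ) / 2) * conj z ^ ((1 : ℂ) / 2) = ‖z‖ := by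
  have hhalf : (1 : ℂ) / 2 = ((1 / 2 : ℝ) : ℂ) := by push_cast; rfl
  rw [conj_cpow _ _ hz, hhalf, conj_ofReal, mul_conj, normSq_eq_norm_sq, norm_cpow_real,
    ← Real.sqrt_eq_rpow, Real.sq_sqrt (norm_nonneg z)]

lemma frftConst_ne_zero (α : ℝ) : frftConst α ≠ 0 := by
  have hbase : 1 - I * (Real.cot α : ℂ) ≠ 0 := fun h => by
    simpa only [re_sub_I_mul_ofReal, one_re, zero_re, one_ne_zero] using congrArg re h
  exact div_ne_zero (fun h => hbase ((cpow_eq_zero_iff _ _).mp h).1)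
    (ofReal_ne_zero.mpr (Real.sqrt_ne_zero'.mpr Real.pi_pos))

lemma frftConst_neg_mul_frftConst {α : ℝ} (hα : Real.sin α ≠ 0) :
    frftConst (-α) * frftConst α = ((|Real.pi * Real.sin α| : ℝ) : ℂ)⁻¹ := by
  have hconj : 1 - I * (Real.cot (-α) : ℂ) = conj (1 - I * (Real.cot α : ℂ)) := by
    simp [real_cot_neg, -ofReal_cot]
  have harg : (1 - I * (Real.cot α : ℂ)).arg ≠ Real.pi := fun h => by
    have hre := (arg_eq_pi_iff.mp h).1
    rw [re_sub_I_mul_ofReal, one_re] at hre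
    exact absurd hre (by norm_num)
  have hpi : (√Real.pi : ℂ) * (√Real.pi : ℂ) = Real.pi := by
    exact_mod_cast Real.mul_self_sqrt Real.pi_pos.le
  rw [frftConst, frftConst, div_mul_div_comm, hpi, hconj, mul_comm (_ ^ _),
    cpow_half_mul_conj_cpow_half harg, norm_one_sub_I_mul_cot hα, abs_mul,
    abs_of_pos Real.pi_pos]
  push_cast
  field_simp

end Normalization

lemma frft_eq_fourier (α : ℝ) (f : ℝ → ℂ) (x : ℝ) :
    FrFT α f x = frftConst α * chirp (Real.cot α) x *
      𝓕 (fun t => chirp (Real.cot α) t * f t) ((Real.pi * Real.sin α)⁻¹ * x) := by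
  have hpi : (Real.pi : ℂ) ≠ 0 := ofReal_ne_zero.mpr Real.pi_ne_zero
  rw [FrFT, Real.fourier_real_eq_integral_exp_smul, frftConst, chirp, mul_right_comm I]
  congr 2 with t
  rw [chirp, smul_eq_mul, ← mul_assoc, ← Complex.exp_add]
  congr 2
  push_cast
  field_simp
  ring

lemma frft_neg_eq_fourierInv (α : ℝ) (f : ℝ → ℂ) (x : ℝ) :
    FrFT (-α) f x = frftConst (-α) * chirp (-Real.cot α) x *
      𝓕⁻ (fun t => chirp (-Real.cot α) t * f t) ((Real.pi * Real.sin α)⁻¹ * x) := by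
  rw [frft_eq_fourier, real_cot_neg, Real.fourierInv_eq_fourier_neg, Real.sin_neg, mul_neg, inv_neg,
    neg_mul]

lemma chirp_neg_mul_frft (α : ℝ) (f : ℝ → ℂ) (t : ℝ) :
    chirp (-Real.cot α) t * FrFT α f t = frftConst α *
      𝓕 (fun u => chirp (Real.cot α) u * f u) ((Real.pi * Real.sin α)⁻¹ * t) := by
  rw [frft_eq_fourier]
  linear_combination (frftConst α *
    𝓕 (fun u => chirp (Real.cot α) u * f u) ((Real.pi * Real.sin α)⁻¹ * t)) *
      chirp_neg_mul_chirp (Real.cot α) t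

lemma integrable_frft_iff {α : ℝ} (hα : Real.sin α ≠ 0) {f : ℝ → ℂ} :
    Integrable (FrFT α f) ↔ Integrable (𝓕 fun t => chirp (Real.cot α) t * f t) := by
  rw [← integrable_chirp_mul_iff (c := -Real.cot α)]
  simp only [chirp_neg_mul_frft]
  rw [integrable_const_mul_iff (frftConst_ne_zero α).isUnit,
    integrable_comp_mul_left_iff _ (inv_ne_zero (mul_ne_zero Real.pi_ne_zero hα))]

lemma integrable_frft_polyGaussian {α : ℝ} (hα : Real.sin α ≠ 0) {b : ℂ} (hb : 0 < b.re)
    (q : ℂ[X]) : Integrable (FrFT α (polyGaussian b q)) := by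
  simp only [integrable_frft_iff hα, chirp_mul_polyGaussian]
  exact integrable_fourier_polyGaussian ((re_sub_I_mul_ofReal b _).symm ▸ hb) q

theorem frft_inverse_general {α : ℝ} (hα : Real.sin α ≠ 0) {f : ℝ → ℂ} (hf : Integrable f)
    (hFf : Integrable (FrFT α f)) {x : ℝ} (hx : ContinuousAt f x) :
    FrFT (-α) (FrFT α f) x = f x := by
  set d := Real.pi * Real.sin α with hd
  set g := fun t => chirp (Real.cot α) t * f t with hg
  have hinversion : 𝓕⁻ (𝓕 g) x = g x :=
    (integrable_chirp_mul hf _).fourierInv_fourier_eq ((integrable_frft_iff hα).mp hFf)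
      ((continuous_chirp _).continuousAt.mul hx)
  have hconst : frftConst (-α) * frftConst α * |d| = 1 := by
    rw [frftConst_neg_mul_frftConst hα]
    exact inv_mul_cancel₀ (ofReal_ne_zero.mpr (abs_ne_zero.mpr (mul_ne_zero Real.pi_ne_zero hα)))
  have hdilation : 𝓕⁻ (fun t => 𝓕 g (d⁻¹ * t)) (d⁻¹ * x) = |d| * g x := by
    simpa only [smul_eq_mul, Module.finrank_self, pow_one, inv_inv, hinversion, real_smul]
      using fourierInv_comp_smul (𝓕 g) d⁻¹ x
  calc FrFT (-α) (FrFT α f) x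
      = frftConst (-α) * chirp (-Real.cot α) x *
          𝓕⁻ (fun t => frftConst α • 𝓕 g (d⁻¹ * t)) (d⁻¹ * x) := by
        simp only [frft_neg_eq_fourierInv, chirp_neg_mul_frft, smul_eq_mul, hd, hg]
    _ = frftConst (-α) * frftConst α * |d| * (chirp (-Real.cot α) x * chirp (Real.cot α) x) *
          f x := by
        rw [fourierInv_const_smul, hdilation, smul_eq_mul]
        ring
    _ = f x := by rw [hconst, chirp_neg_mul_chirp, one_mul, one_mul]

/-- The inverse of the α-angle fractional Fourier transform is the (-α)-angle one:
F_{-α}(F_α f) = f on functions p(x)e^{-x²}. -/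
theorem frft_inverse (α : ℝ) (hα : Real.sin α ≠ 0) (p : Polynomial ℂ) (f : ℝ → ℂ)
    (hf : ∀ x : ℝ, f x = p.eval (x : ℂ) * Complex.exp (-(x:ℂ)^2)) (x : ℝ) :
    FrFT (-α) (FrFT α f) x = f x := by
  obtain rfl : f = polyGaussian 1 p := funext fun t => by rw [hf, polyGaussian, neg_one_mul]
  exact frft_inverse_general hα (integrable_polyGaussian (by simp) p)
    (integrable_frft_polyGaussian hα (by simp) p)
    (contDiff_polyGaussian 1 p).continuous.continuousAt
end

section
/- Let α, φ ∈ ℝ with sin α ≠ 0 and let f : ℂ → ℂ be a polynomial function. Then for every z ∈ ℂ, B(H^α_φ(B⁻¹f))(z) = (1/√π) ∫_ℂ f(w) e^{z w̄} A_φ((e^{iα} z + e^{-iα} w̄)/√2) dλ(w). -/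
open MeasureTheory Complex

/-- Integration against the Gaussian measure dλ(z) = π⁻¹ e^{-|z|²} dA(z) on ℂ. -/
noncomputable def gaussInt (F : ℂ → ℂ) : ℂ :=
  (Real.pi : ℂ)⁻¹ * ∫ w : ℂ, F w * Complex.exp (-(‖w‖ : ℂ)^2)

/-- The Bargmann transform Bf(z) = (2/π)^{1/4} ∫ f(x) e^{2xz - x² - z²/2} dx. -/
noncomputable def Bargmann (f : ℝ → ℂ) (z : ℂ) : ℂ :=
  (((2 / Real.pi) ^ ((1:ℝ)/4) : ℝ) : ℂ) *
    ∫ x : ℝ, f x * Complex.exp (2*x*z - (x:ℂ)^2 - z^2/2)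

/-- The inverse Bargmann transform B⁻¹F(x) = (2/π)^{1/4} ∫_ℂ F(z) e^{2xz̄ - x² - z̄²/2} dλ(z). -/
noncomputable def BargmannInv (F : ℂ → ℂ) (x : ℝ) : ℂ :=
  (((2 / Real.pi) ^ ((1:ℝ)/4) : ℝ) : ℂ) *
    gaussInt (fun z => F z * Complex.exp (2*x*(starRingEnd ℂ z) - (x:ℂ)^2 - (starRingEnd ℂ z)^2/2))

/-- The Heaviside step function. -/
noncomputable def heaviside (x : ℝ) : ℝ := if 0 ≤ x then 1 else 0

/-- The fractional Hilbert transform H^α_φ f = F_{-α}[x ↦ (e^{-iφ}h(x) + e^{iφ}h(-x)) F_α f(x)]. -/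
noncomputable def fracHilbert (α φ : ℝ) (f : ℝ → ℂ) : ℝ → ℂ :=
  FrFT (-α) (fun x =>
    (Complex.exp (-(Complex.I * φ)) * ((heaviside x : ℝ) : ℂ)
      + Complex.exp (Complex.I * φ) * ((heaviside (-x) : ℝ) : ℂ)) * FrFT α f x)

/-- ∫₀^z e^{-u²} du, the integral of the entire function e^{-u²} along the segment from 0 to z
(which equals the integral along any path from 0 to z). -/
noncomputable def erfInt (z : ℂ) : ℂ :=
  ∫ t in (0:ℝ)..1, z * Complex.exp (-((t:ℂ) * z)^2)

/-- A_φ(z) = √π cos φ - 2i sin φ ∫₀^z e^{-u²} du. -/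
noncomputable def Aphi (φ : ℝ) (z : ℂ) : ℂ :=
  (Real.sqrt Real.pi : ℂ) * ((Real.cos φ : ℝ) : ℂ) - 2 * Complex.I * ((Real.sin φ : ℝ) : ℂ) * erfInt z

/-!
Write `k_a(x) = e^{2xa - x² - a²/2}` for the Bargmann kernel. Completing the square shows that the
fractional Fourier transform only rotates its parameter, `F_α k_a = k_{e^{-iα} a}`; since `F_α` has
a symmetric kernel, `B (F_α g)(z) = (B g)(e^{-iα} z)`. As `B⁻¹f` is a superposition of the kernels
`k_{w̄}`, only `∫ m k_a k_b` remains to be computed, with `m` the Heaviside phase,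
`a = e^{-iα} w̄` and `b = e^{iα} z`. It is a pair of half-line Gaussian integrals, that is, an error
function at `±(a + b)/√2`. The interchanges of integrals rest on `‖k_a‖_{L¹} = √π e^{|a|²/2}`, which
makes integrability of `e^{-|w|²/2} f(w)` the natural condition on `f`.
-/

section HalfLineGaussian

open Set Filter Topology

lemma norm_cexp_neg_ofReal_sub_sq (c : ℂ) (y : ℝ) :
    ‖Complex.exp (-((y : ℂ) - c) ^ 2)‖ = Real.exp (c.im ^ 2 - (y - c.re) ^ 2) := by
  rw [Complex.norm_exp]
  congr 1
  simp only [pow_two, neg_re, mul_re, sub_re, sub_im, ofReal_re, ofReal_im]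
  ring

lemma norm_cexp_neg_ofReal_sub_sq_le {c : ℂ} {R : ℝ} (hc : ‖c‖ ≤ R) (y : ℝ) :
    ‖Complex.exp (-((y : ℂ) - c) ^ 2)‖ ≤ Real.exp (R ^ 2) * Real.exp (-(1 / 2) * y ^ 2) := by
  rw [norm_cexp_neg_ofReal_sub_sq, ← Real.exp_add, Real.exp_le_exp]
  have hsq : c.re ^ 2 + c.im ^ 2 ≤ R ^ 2 := by
    rw [sq c.re, sq c.im, ← normSq_apply, normSq_eq_norm_sq]
    gcongr
  nlinarith [sq_nonneg (y - 2 * c.re)]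

lemma norm_mul_cexp_neg_ofReal_sub_sq_le {c : ℂ} {R : ℝ} (hc : ‖c‖ ≤ R) (y : ℝ) :
    ‖2 * ((y : ℂ) - c) * Complex.exp (-((y : ℂ) - c) ^ 2)‖ ≤
      2 * (|y| + R) * (Real.exp (R ^ 2) * Real.exp (-(1 / 2) * y ^ 2)) := by
  have hlin : ‖(y : ℂ) - c‖ ≤ |y| + R := by
    simpa using (norm_sub_le (y : ℂ) c).trans (add_le_add_right hc _)
  rw [norm_mul, norm_mul, Complex.norm_two]
  have hR : 0 ≤ R := (norm_nonneg c).trans hc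
  gcongr
  exact norm_cexp_neg_ofReal_sub_sq_le hc y

lemma integrable_abs_add_mul_exp_neg_sq (R : ℝ) :
    Integrable fun y : ℝ => 2 * (|y| + R) * (Real.exp (R ^ 2) * Real.exp (-(1 / 2) * y ^ 2)) := by
  have hgauss : Integrable fun y : ℝ => Real.exp (-(1 / 2) * y ^ 2) :=
    integrable_exp_neg_mul_sq (by norm_num)
  have hmoment : Integrable fun y : ℝ => |y| * Real.exp (-(1 / 2) * y ^ 2) := by
    simpa only [norm_mul, Real.norm_eq_abs, Real.abs_exp] using
      (integrable_mul_exp_neg_mul_sq (b := 1 / 2) (by norm_num)).norm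
  refine ((hmoment.const_mul (2 * Real.exp (R ^ 2))).add
    (hgauss.const_mul (2 * R * Real.exp (R ^ 2)))).congr (.of_forall fun y => ?_)
  simp only [Pi.add_apply]
  ring

lemma integrable_cexp_neg_ofReal_sub_sq (c : ℂ) :
    Integrable fun y : ℝ => Complex.exp (-((y : ℂ) - c) ^ 2) :=
  ((integrable_exp_neg_mul_sq (by norm_num)).const_mul _).mono'
    (by fun_prop) (.of_forall (norm_cexp_neg_ofReal_sub_sq_le le_rfl))

lemma tendsto_cexp_neg_ofReal_sub_sq_atTop (c : ℂ) :
    Tendsto (fun y : ℝ => Complex.exp (-((y : ℂ) - c) ^ 2)) atTop (𝓝 0) := by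
  refine squeeze_zero_norm (norm_cexp_neg_ofReal_sub_sq_le le_rfl) ?_
  rw [← mul_zero (Real.exp (‖c‖ ^ 2))]
  exact (Real.tendsto_exp_atBot.comp <| (tendsto_pow_atTop two_ne_zero).const_mul_atTop_of_neg
    (by norm_num)).const_mul _

lemma integral_Ioi_mul_cexp_neg_ofReal_sub_sq (c : ℂ) :
    ∫ y in Ioi (0 : ℝ), 2 * ((y : ℂ) - c) * Complex.exp (-((y : ℂ) - c) ^ 2) =
      Complex.exp (-c ^ 2) := by
  have hderiv (y : ℝ) : HasDerivAt (fun y : ℝ => -Complex.exp (-((y : ℂ) - c) ^ 2))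
      (2 * ((y : ℂ) - c) * Complex.exp (-((y : ℂ) - c) ^ 2)) y := by
    refine ((ofRealCLM.hasDerivAt.sub_const c).fun_pow 2).fun_neg.cexp.fun_neg.congr_deriv ?_
    simp only [ofRealCLM_apply, ofReal_one]
    push_cast
    ring
  have hint : Integrable fun y : ℝ => 2 * ((y : ℂ) - c) * Complex.exp (-((y : ℂ) - c) ^ 2) :=
    (integrable_abs_add_mul_exp_neg_sq ‖c‖).mono' (by fun_prop)
      (.of_forall (norm_mul_cexp_neg_ofReal_sub_sq_le le_rfl))
  rw [integral_Ioi_of_hasDerivAt_of_tendsto' (fun y _ => hderiv y) hint.integrableOn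
    (tendsto_cexp_neg_ofReal_sub_sq_atTop c).neg]
  simp

lemma intervalIntegral_mul_cexp_neg_ofReal_sub_sq (c : ℂ) (y : ℝ) :
    ∫ τ in (0 : ℝ)..1, c * (2 * ((y : ℂ) - τ * c) * Complex.exp (-((y : ℂ) - τ * c) ^ 2)) =
      Complex.exp (-((y : ℂ) - c) ^ 2) - Complex.exp (-(y : ℂ) ^ 2) := by
  have hderiv (τ : ℝ) : HasDerivAt (fun τ : ℝ => Complex.exp (-((y : ℂ) - τ * c) ^ 2))
      (c * (2 * ((y : ℂ) - τ * c) * Complex.exp (-((y : ℂ) - τ * c) ^ 2))) τ := by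
    refine (((ofRealCLM.hasDerivAt.mul_const c).const_sub
      (y : ℂ)).fun_pow 2).fun_neg.cexp.congr_deriv ?_
    simp only [ofRealCLM_apply, ofReal_one]
    push_cast
    ring
  rw [intervalIntegral.integral_eq_sub_of_hasDerivAt (fun τ _ => hderiv τ)
    (Continuous.intervalIntegrable (by fun_prop) _ _)]
  simp

lemma integrable_prod_mul_cexp_neg_ofReal_sub_sq (c : ℂ) :
    Integrable (Function.uncurry fun τ y : ℝ =>
        c * (2 * ((y : ℂ) - τ * c) * Complex.exp (-((y : ℂ) - τ * c) ^ 2)))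
      ((volume.restrict (uIoc 0 1)).prod (volume.restrict (Ioi 0))) := by
  refine Integrable.const_mul (f := fun q : ℝ × ℝ => 2 * ((q.2 : ℂ) - q.1 * c) *
    Complex.exp (-((q.2 : ℂ) - q.1 * c) ^ 2)) ?_ c
  have hfinite : IsFiniteMeasure (volume.restrict (uIoc (0 : ℝ) 1)) :=
    ⟨by simp [uIoc_of_le]⟩
  refine ((integrable_abs_add_mul_exp_neg_sq ‖c‖).restrict.comp_snd _).mono' (by fun_prop) ?_
  rw [Measure.prod_restrict]
  refine ae_restrict_of_forall_mem (measurableSet_uIoc.prod measurableSet_Ioi) fun q hq => ?_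
  refine norm_mul_cexp_neg_ofReal_sub_sq_le ?_ q.2
  rw [mem_prod, uIoc_of_le zero_le_one] at hq
  rw [norm_mul, norm_real, Real.norm_of_nonneg hq.1.1.le]
  exact mul_le_of_le_one_left (norm_nonneg c) hq.1.2

-- Writing the difference from the centred Gaussian as an integral over the segment from `0` to `c`
-- and swapping makes the inner integral exact, so no contour has to be shifted.
lemma integral_Ioi_cexp_neg_ofReal_sub_sq (c : ℂ) :
    ∫ y in Ioi (0 : ℝ), Complex.exp (-((y : ℂ) - c) ^ 2) =
      (Real.sqrt Real.pi : ℂ) / 2 + erfInt c := by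
  have hcentred : ∫ y in Ioi (0 : ℝ), Complex.exp (-(y : ℂ) ^ 2) = (Real.sqrt Real.pi : ℂ) / 2 := by
    have h := integral_ofReal (𝕜 := ℂ) (μ := volume.restrict (Ioi 0))
      (f := fun y : ℝ => Real.exp (-1 * y ^ 2))
    rw [integral_gaussian_Ioi, div_one] at h
    simpa using h
  have hdiff : (∫ y in Ioi (0 : ℝ), Complex.exp (-((y : ℂ) - c) ^ 2)) -
      ∫ y in Ioi (0 : ℝ), Complex.exp (-(y : ℂ) ^ 2) = erfInt c := by
    rw [← integral_sub (integrable_cexp_neg_ofReal_sub_sq c).restrict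
      (by simpa using (integrable_cexp_neg_ofReal_sub_sq 0).restrict)]
    simp_rw [← intervalIntegral_mul_cexp_neg_ofReal_sub_sq,
      ← intervalIntegral_integral_swap (integrable_prod_mul_cexp_neg_ofReal_sub_sq c),
      integral_const_mul, integral_Ioi_mul_cexp_neg_ofReal_sub_sq, erfInt]
  rw [← hcentred, ← hdiff, add_sub_cancel]

lemma erfInt_neg (z : ℂ) : erfInt (-z) = -erfInt z := by
  simp only [erfInt, mul_neg, neg_sq, neg_mul, intervalIntegral.integral_neg]

end HalfLineGaussian

section BargmannKernel

/-- The kernel `e^{2xa - x² - a²/2}` of the Bargmann transform, as a function of the real variable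
`x`. Both `Bargmann` and, with `a = w̄`, `BargmannInv` integrate against it. -/
noncomputable def bargmannKernel (a : ℂ) (x : ℝ) : ℂ :=
  Complex.exp (2 * x * a - (x : ℂ) ^ 2 - a ^ 2 / 2)

/-- The normalizing constant `(2/π)^{1/4}` of the Bargmann transform. -/
noncomputable def bargmannConst : ℂ := (((2 / Real.pi) ^ ((1 : ℝ) / 4) : ℝ) : ℂ)

lemma bargmann_eq (f : ℝ → ℂ) (z : ℂ) :
    Bargmann f z = bargmannConst * ∫ x, f x * bargmannKernel z x :=
  rfl

lemma bargmann_mul_const (f : ℝ → ℂ) (c z : ℂ) :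
    Bargmann (fun x => f x * c) z = Bargmann f z * c := by
  simp_rw [bargmann_eq, mul_right_comm _ c]
  rw [integral_mul_const, mul_assoc]

lemma bargmannConst_mul_self :
    bargmannConst * bargmannConst = (Real.sqrt 2 : ℂ) / (Real.sqrt Real.pi : ℂ) := by
  rw [bargmannConst, ← ofReal_mul, ← ofReal_div, ← Real.rpow_add (by positivity),
    ← Real.sqrt_div zero_le_two, Real.sqrt_eq_rpow]
  norm_num

lemma bargmannConst_div_sqrt_two_mul :
    bargmannConst / (Real.sqrt 2 : ℂ) * bargmannConst = (Real.sqrt Real.pi : ℂ)⁻¹ := by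
  rw [div_mul_eq_mul_div, bargmannConst_mul_self, div_right_comm, div_self (by simp), one_div]

lemma continuous_uncurry_bargmannKernel : Continuous (Function.uncurry bargmannKernel) := by
  unfold bargmannKernel Function.uncurry
  fun_prop

lemma continuous_bargmannKernel (a : ℂ) : Continuous (bargmannKernel a) :=
  continuous_uncurry_bargmannKernel.comp (by fun_prop : Continuous fun x : ℝ => (a, x))

lemma bargmannKernel_eq_gaussian (a : ℂ) (x : ℝ) :
    bargmannKernel a x = Complex.exp (a ^ 2 / 2) * Complex.exp (-((x : ℂ) - a) ^ 2) := by
  rw [bargmannKernel, ← Complex.exp_add]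
  ring_nf

lemma bargmannKernel_neg (a : ℂ) (x : ℝ) : bargmannKernel a (-x) = bargmannKernel (-a) x := by
  simp only [bargmannKernel, ofReal_neg]
  ring_nf

lemma integrable_bargmannKernel (a : ℂ) : Integrable (bargmannKernel a) :=
  ((integrable_cexp_neg_ofReal_sub_sq a).const_mul (Complex.exp (a ^ 2 / 2))).congr
    (.of_forall fun x => (bargmannKernel_eq_gaussian a x).symm)

lemma norm_bargmannKernel (a : ℂ) (x : ℝ) :
    ‖bargmannKernel a x‖ = Real.exp (‖a‖ ^ 2 / 2) * Real.exp (-(x - a.re) ^ 2) := by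
  rw [bargmannKernel_eq_gaussian, norm_mul, norm_cexp_neg_ofReal_sub_sq, Complex.norm_exp,
    ← Real.exp_add, ← Real.exp_add, ← normSq_eq_norm_sq, normSq_apply]
  congr 1
  simp only [pow_two, div_ofNat_re, mul_re]
  ring

lemma norm_bargmannKernel_le (a : ℂ) (x : ℝ) : ‖bargmannKernel a x‖ ≤ Real.exp (‖a‖ ^ 2 / 2) := by
  rw [norm_bargmannKernel]
  exact mul_le_of_le_one_right (Real.exp_pos _).le
    (Real.exp_le_one_iff.2 (neg_nonpos.2 (sq_nonneg _)))

lemma integral_norm_bargmannKernel (a : ℂ) :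
    ∫ x, ‖bargmannKernel a x‖ = Real.sqrt Real.pi * Real.exp (‖a‖ ^ 2 / 2) := by
  have hgauss := integral_gaussian 1
  simp only [neg_mul, one_mul, div_one] at hgauss
  simp_rw [norm_bargmannKernel]
  rw [integral_const_mul, integral_sub_right_eq_self (fun x : ℝ => Real.exp (-x ^ 2)), hgauss,
    mul_comm]

lemma bargmannKernel_mul_bargmannKernel (a b : ℂ) (x : ℝ) :
    bargmannKernel a x * bargmannKernel b x = Complex.exp (a * b) *
      Complex.exp (-(((Real.sqrt 2 * x : ℝ) : ℂ) - (a + b) / (Real.sqrt 2 : ℂ)) ^ 2) := by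
  have hsq : (Real.sqrt 2 : ℂ) ^ 2 = 2 := by
    exact_mod_cast congrArg (fun r : ℝ => (r : ℂ)) (Real.sq_sqrt zero_le_two)
  have hne : (Real.sqrt 2 : ℂ) ≠ 0 := by simp
  have hexpand : (((Real.sqrt 2 * x : ℝ) : ℂ) - (a + b) / (Real.sqrt 2 : ℂ)) ^ 2 =
      2 * (x : ℂ) ^ 2 - 2 * x * (a + b) + (a + b) ^ 2 / 2 := by
    rw [ofReal_mul, sub_sq, mul_pow, div_pow, hsq]
    field_simp
  rw [hexpand, bargmannKernel, bargmannKernel, ← Complex.exp_add, ← Complex.exp_add]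
  ring_nf

lemma integral_Ioi_bargmannKernel_mul_bargmannKernel (a b : ℂ) :
    ∫ x in Set.Ioi (0 : ℝ), bargmannKernel a x * bargmannKernel b x =
      Complex.exp (a * b) * ((Real.sqrt 2 : ℂ)⁻¹ *
        ((Real.sqrt Real.pi : ℂ) / 2 + erfInt ((a + b) / (Real.sqrt 2 : ℂ)))) := by
  simp_rw [bargmannKernel_mul_bargmannKernel]
  rw [integral_const_mul, integral_comp_mul_left_Ioi
    (fun y : ℝ => Complex.exp (-((y : ℂ) - (a + b) / (Real.sqrt 2 : ℂ)) ^ 2)) 0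
    (Real.sqrt_pos.2 zero_lt_two), mul_zero, integral_Ioi_cexp_neg_ofReal_sub_sq,
    Complex.real_smul, ofReal_inv]

end BargmannKernel

section Superposition

variable {Ω : Type*} [MeasurableSpace Ω] {μ : Measure Ω} [SFinite μ]

lemma integrable_bargmannKernel_mul_prod {a g : Ω → ℂ} (ha : AEStronglyMeasurable a μ)
    (hag : Integrable (fun ω => Real.exp (‖a ω‖ ^ 2 / 2) • g ω) μ) :
    Integrable (Function.uncurry fun x ω => bargmannKernel (a ω) x * g ω) (volume.prod μ) := by
  have hg : AEStronglyMeasurable g μ := by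
    have hweight : AEStronglyMeasurable (fun ω => Real.exp (-(‖a ω‖ ^ 2 / 2))) μ :=
      (by fun_prop : Continuous fun b : ℂ => Real.exp (-(‖b‖ ^ 2 / 2))).comp_aestronglyMeasurable ha
    refine (hweight.smul hag.aestronglyMeasurable).congr (.of_forall fun ω => ?_)
    change Real.exp (-(‖a ω‖ ^ 2 / 2)) • Real.exp (‖a ω‖ ^ 2 / 2) • g ω = g ω
    rw [smul_smul, ← Real.exp_add, neg_add_cancel, Real.exp_zero, one_smul]
  have hmeas : AEStronglyMeasurable (fun q : ℝ × Ω => bargmannKernel (a q.2) q.1 * g q.2)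
      (volume.prod μ) :=
    (continuous_uncurry_bargmannKernel.comp_aestronglyMeasurable
      (ha.comp_snd.prodMk measurable_fst.aestronglyMeasurable)).mul hg.comp_snd
  refine (integrable_prod_iff' hmeas).2
    ⟨.of_forall fun ω => (integrable_bargmannKernel (a ω)).mul_const (g ω), ?_⟩
  convert hag.norm.const_mul (Real.sqrt Real.pi) using 2 with ω
  simp only [norm_mul, integral_mul_const, integral_norm_bargmannKernel, norm_smul,
    Real.norm_eq_abs, Real.abs_exp, mul_assoc]

lemma bargmann_integral {h : ℝ → Ω → ℂ} (hh : Integrable (Function.uncurry h) (volume.prod μ))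
    (z : ℂ) :
    Bargmann (fun x => ∫ ω, h x ω ∂μ) z = ∫ ω, Bargmann (fun x => h x ω) z ∂μ := by
  simp_rw [bargmann_eq, integral_const_mul, ← integral_mul_const]
  rw [integral_integral_swap]
  exact hh.mul_bdd
    ((continuous_bargmannKernel z).measurable.comp measurable_fst).aestronglyMeasurable
    (.of_forall fun q => norm_bargmannKernel_le z q.1)

end Superposition

section FractionalFourier

/-- The symmetric integral kernel of `FrFT α`, including the normalizing factor. -/
noncomputable def frftKernel (α x t : ℝ) : ℂ :=
  (1 - Complex.I * Real.cot α) ^ ((1 : ℂ) / 2) / (Real.sqrt Real.pi : ℂ) *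
    Complex.exp (((Real.cot α * (x ^ 2 + t ^ 2) - 2 * (x * t * (Real.sin α)⁻¹) : ℝ) : ℂ) * I)

lemma frftKernel_comm (α x t : ℝ) : frftKernel α x t = frftKernel α t x := by
  simp only [frftKernel, add_comm (x ^ 2), mul_comm x]

lemma norm_frftKernel (α x t : ℝ) : ‖frftKernel α x t‖ = ‖frftKernel α 0 0‖ := by
  simp only [frftKernel, norm_mul, norm_exp_ofReal_mul_I]

lemma continuous_uncurry_frftKernel (α : ℝ) : Continuous (Function.uncurry (frftKernel α)) := by
  unfold frftKernel Function.uncurry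
  fun_prop

lemma continuous_frftKernel (α x : ℝ) : Continuous (frftKernel α x) := by
  unfold frftKernel
  fun_prop

lemma frft_eq_integral (α : ℝ) (f : ℝ → ℂ) (x : ℝ) :
    FrFT α f x = ∫ t, frftKernel α x t * f t := by
  rw [FrFT, ← integral_const_mul]
  refine integral_congr_ae (.of_forall fun t => ?_)
  dsimp only
  rw [frftKernel, mul_assoc _ (Complex.exp _), ← mul_assoc (Complex.exp _), ← Complex.exp_add,
    ← mul_assoc]
  push_cast
  ring_nf

lemma frft_mul_const (α : ℝ) (f : ℝ → ℂ) (c : ℂ) (x : ℝ) :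
    FrFT α (fun t => f t * c) x = FrFT α f x * c := by
  simp only [frft_eq_integral, ← mul_assoc, integral_mul_const]

lemma integral_frft_mul (α : ℝ) {f g : ℝ → ℂ} (hf : Integrable f) (hg : Integrable g) :
    ∫ x, FrFT α f x * g x = ∫ x, f x * FrFT α g x := by
  simp_rw [frft_eq_integral, ← integral_mul_const, ← integral_const_mul]
  rw [integral_integral_swap]
  · refine integral_congr_ae (.of_forall fun t => integral_congr_ae (.of_forall fun x => ?_))
    simp only [frftKernel_comm α x t]
    ring
  · refine ((hg.mul_prod hf).bdd_mul (continuous_uncurry_frftKernel α).aestronglyMeasurable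
      (.of_forall fun q => (norm_frftKernel α q.1 q.2).le)).congr (.of_forall fun q => ?_)
    simp only [Function.uncurry]
    ring

lemma frft_integral {Ω : Type*} [MeasurableSpace Ω] {μ : Measure Ω} [SFinite μ] {h : ℝ → Ω → ℂ}
    (hh : Integrable (Function.uncurry h) (volume.prod μ)) (α x : ℝ) :
    FrFT α (fun t => ∫ ω, h t ω ∂μ) x = ∫ ω, FrFT α (fun t => h t ω) x ∂μ := by
  simp_rw [frft_eq_integral, ← integral_const_mul]
  exact integral_integral_swap <| hh.bdd_mul
    ((continuous_frftKernel α x).measurable.comp measurable_fst).aestronglyMeasurable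
    (.of_forall fun q => (norm_frftKernel α x q.1).le)

lemma ofReal_mul_cpow {r : ℝ} (hr : 0 < r) {z : ℂ} (hz : z ≠ 0) (s : ℂ) :
    ((r : ℂ) * z) ^ s = (r : ℂ) ^ s * z ^ s := by
  have hr' : (r : ℂ) ≠ 0 := ofReal_ne_zero.2 hr.ne'
  rw [cpow_def_of_ne_zero (mul_ne_zero hr' hz), cpow_def_of_ne_zero hr', cpow_def_of_ne_zero hz,
    log_ofReal_mul hr hz, ofReal_log hr.le, add_mul, Complex.exp_add]

lemma cpow_half_div_sqrt_pi_mul {q : ℂ} (hq : 0 < q.re) :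
    q ^ ((1 : ℂ) / 2) / (Real.sqrt Real.pi : ℂ) * ((Real.pi : ℂ) / q) ^ ((1 : ℂ) / 2) = 1 := by
  have hq0 : q ≠ 0 := by
    rintro rfl
    exact hq.ne rfl
  have harg : q.arg ≠ Real.pi := fun h => (arg_eq_pi_iff.1 h).1.not_gt hq
  have hsqrt : (Real.pi : ℂ) ^ ((1 : ℂ) / 2) = (Real.sqrt Real.pi : ℂ) := by
    rw [Real.sqrt_eq_rpow, ofReal_cpow Real.pi_pos.le]
    norm_num
  have hsqrt0 : (Real.sqrt Real.pi : ℂ) ≠ 0 := ofReal_ne_zero.2 (Real.sqrt_pos.2 Real.pi_pos).ne'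
  have hcpow0 : q ^ ((1 : ℂ) / 2) ≠ 0 := by simp [hq0]
  rw [div_eq_mul_inv (Real.pi : ℂ), ofReal_mul_cpow Real.pi_pos (inv_ne_zero hq0),
    inv_cpow _ _ harg, hsqrt]
  field_simp

lemma cexp_neg_I_mul (α : ℝ) :
    Complex.exp (-(I * α)) = (Real.cos α : ℂ) - I * (Real.sin α : ℂ) := by
  rw [← mul_neg, mul_comm, ← ofReal_neg, exp_ofReal_mul_I, Real.cos_neg, Real.sin_neg]
  push_cast
  ring

lemma one_sub_I_mul_cot {α : ℝ} (hα : Real.sin α ≠ 0) :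
    (1 - I * Real.cot α : ℂ) = (I * (Real.sin α : ℂ) * Complex.exp (-(I * α)))⁻¹ := by
  have hs : (Real.sin α : ℂ) ≠ 0 := ofReal_ne_zero.2 hα
  have hpyth : (Real.sin α : ℂ) ^ 2 + (Real.cos α : ℂ) ^ 2 = 1 := by
    exact_mod_cast Real.sin_sq_add_cos_sq α
  refine eq_inv_of_mul_eq_one_left ?_
  rw [cexp_neg_I_mul, Real.cot_eq_cos_div_sin, ofReal_div]
  field_simp
  linear_combination hpyth + (-(Real.sin α : ℂ) ^ 2 - (Real.cos α : ℂ) ^ 2 +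
    I * Real.sin α * Real.cos α) * I_sq

lemma completed_square_frft {α : ℝ} (hα : Real.sin α ≠ 0) (a x : ℂ) :
    I * Real.cot α * x ^ 2 - a ^ 2 / 2 -
        (2 * (a - I * x / Real.sin α)) ^ 2 / (4 * -(1 - I * Real.cot α)) =
      2 * x * (Complex.exp (-(I * α)) * a) - x ^ 2 - (Complex.exp (-(I * α)) * a) ^ 2 / 2 := by
  have hs : (Real.sin α : ℂ) ≠ 0 := ofReal_ne_zero.2 hα
  have hpyth : (Real.sin α : ℂ) ^ 2 + (Real.cos α : ℂ) ^ 2 = 1 := by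
    exact_mod_cast Real.sin_sq_add_cos_sq α
  rw [one_sub_I_mul_cot hα, mul_neg, div_neg, div_mul_eq_div_div, div_inv_eq_mul, cexp_neg_I_mul,
    Real.cot_eq_cos_div_sin, ofReal_div]
  generalize (Real.sin α : ℂ) = s at *
  generalize (Real.cos α : ℂ) = c at *
  field_simp
  linear_combination (4 * a ^ 2 * s) * hpyth + (-4 * a ^ 2 * s ^ 3 -
    16 * a * s * x * (c - I * s) + 8 * x ^ 2 * (I * c - s * (I ^ 2 - 1))) * I_sq

lemma frft_bargmannKernel {α : ℝ} (hα : Real.sin α ≠ 0) (a : ℂ) :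
    FrFT α (bargmannKernel a) = bargmannKernel (Complex.exp (-(I * α)) * a) := by
  ext x
  set q : ℂ := 1 - I * Real.cot α with hq
  have hqre : 0 < q.re := by simp [hq, -ofReal_cot]
  have hquadratic (t : ℝ) : frftKernel α x t * bargmannKernel a t =
      q ^ ((1 : ℂ) / 2) / (Real.sqrt Real.pi : ℂ) * Complex.exp (-q * (t : ℂ) ^ 2 +
        2 * (a - I * x / Real.sin α) * t + (I * Real.cot α * (x : ℂ) ^ 2 - a ^ 2 / 2)) := by
    rw [frftKernel, bargmannKernel, mul_assoc, ← Complex.exp_add]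
    push_cast [hq]
    ring_nf
  simp_rw [frft_eq_integral, hquadratic]
  rw [integral_const_mul, integral_cexp_quadratic (by simpa using hqre), neg_neg, ← mul_assoc,
    cpow_half_div_sqrt_pi_mul hqre, one_mul, bargmannKernel]
  rw [hq, completed_square_frft hα]

lemma bargmann_frft {α : ℝ} (hα : Real.sin α ≠ 0) {g : ℝ → ℂ} (hg : Integrable g) (z : ℂ) :
    Bargmann (FrFT α g) z = Bargmann g (Complex.exp (-(I * α)) * z) := by
  rw [bargmann_eq, bargmann_eq, integral_frft_mul α hg (integrable_bargmannKernel z),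
    frft_bargmannKernel hα]

end FractionalFourier

section HeavisidePhase

/-- The multiplier `e^{-iφ} h(x) + e^{iφ} h(-x)` defining the fractional Hilbert transform. -/
noncomputable def heavisidePhase (φ x : ℝ) : ℂ :=
  Complex.exp (-(I * φ)) * ((heaviside x : ℝ) : ℂ) +
    Complex.exp (I * φ) * ((heaviside (-x) : ℝ) : ℂ)

lemma fracHilbert_eq (α φ : ℝ) (f : ℝ → ℂ) :
    fracHilbert α φ f = FrFT (-α) fun x => heavisidePhase φ x * FrFT α f x :=
  rfl

lemma heavisidePhase_of_pos (φ : ℝ) {x : ℝ} (hx : 0 < x) :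
    heavisidePhase φ x = Complex.exp (-(I * φ)) := by
  simp [heavisidePhase, heaviside, hx.le, hx.not_ge]

lemma heavisidePhase_of_neg (φ : ℝ) {x : ℝ} (hx : x < 0) :
    heavisidePhase φ x = Complex.exp (I * φ) := by
  simp [heavisidePhase, heaviside, hx.le, hx.not_ge]

lemma measurable_heavisidePhase (φ : ℝ) : Measurable (heavisidePhase φ) := by
  have hheaviside : Measurable heaviside :=
    Measurable.ite measurableSet_Ici measurable_const measurable_const
  unfold heavisidePhase
  fun_prop

lemma norm_heavisidePhase_le (φ x : ℝ) : ‖heavisidePhase φ x‖ ≤ 2 := by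
  have hheaviside (y : ℝ) : ‖((heaviside y : ℝ) : ℂ)‖ ≤ 1 := by
    unfold heaviside
    split_ifs <;> simp
  calc ‖heavisidePhase φ x‖
      ≤ ‖((heaviside x : ℝ) : ℂ)‖ + ‖((heaviside (-x) : ℝ) : ℂ)‖ := by
        refine (norm_add_le _ _).trans_eq ?_
        rw [norm_mul, norm_mul, ← mul_neg, ← ofReal_neg, norm_exp_I_mul_ofReal,
          norm_exp_I_mul_ofReal, one_mul, one_mul]
    _ ≤ 2 := by linarith [hheaviside x, hheaviside (-x)]

lemma integrable_heavisidePhase_mul (φ : ℝ) {g : ℝ → ℂ} (hg : Integrable g) :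
    Integrable fun x => heavisidePhase φ x * g x :=
  hg.bdd_mul (measurable_heavisidePhase φ).aestronglyMeasurable
    (.of_forall (norm_heavisidePhase_le φ))

lemma integral_heavisidePhase_mul (φ : ℝ) {g : ℝ → ℂ} (hg : Integrable g) :
    ∫ x, heavisidePhase φ x * g x =
      Complex.exp (-(I * φ)) * (∫ x in Set.Ioi (0 : ℝ), g x) +
        Complex.exp (I * φ) * ∫ x in Set.Ioi (0 : ℝ), g (-x) := by
  have hint := integrable_heavisidePhase_mul φ hg
  have hreflect := integral_comp_neg_Ioi 0 fun x => heavisidePhase φ x * g x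
  rw [neg_zero] at hreflect
  rw [← intervalIntegral.integral_Iic_add_Ioi hint.integrableOn hint.integrableOn, ← hreflect,
    add_comm, ← integral_const_mul, ← integral_const_mul]
  congr 1 <;> refine setIntegral_congr_fun measurableSet_Ioi fun x hx => ?_
  · simp only [heavisidePhase_of_pos φ hx]
  · simp only [heavisidePhase_of_neg φ (neg_neg_of_pos hx)]

lemma bargmann_heavisidePhase_mul_bargmannKernel (φ : ℝ) (a z : ℂ) :
    Bargmann (fun x => heavisidePhase φ x * bargmannKernel a x) z =
      bargmannConst / (Real.sqrt 2 : ℂ) *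
        (Complex.exp (a * z) * Aphi φ ((a + z) / (Real.sqrt 2 : ℂ))) := by
  have hint : Integrable fun x => bargmannKernel a x * bargmannKernel z x :=
    (integrable_bargmannKernel z).bdd_mul (continuous_bargmannKernel a).aestronglyMeasurable
      (.of_forall (norm_bargmannKernel_le a))
  simp_rw [bargmann_eq, mul_assoc (heavisidePhase _ _)]
  rw [integral_heavisidePhase_mul φ hint]
  simp_rw [bargmannKernel_neg]
  rw [integral_Ioi_bargmannKernel_mul_bargmannKernel,
    integral_Ioi_bargmannKernel_mul_bargmannKernel, neg_mul_neg, ← neg_add, neg_div, erfInt_neg,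
    cexp_neg_I_mul, mul_comm I (φ : ℂ), exp_ofReal_mul_I, Aphi]
  ring

end HeavisidePhase

section InverseTransform

open scoped ComplexConjugate

/-- The density `(2/π)^{1/4} π⁻¹ f(w) e^{-|w|²}` with which `BargmannInv f` superposes the kernels
`bargmannKernel w̄`. -/
noncomputable def bargmannInvDensity (f : ℂ → ℂ) (w : ℂ) : ℂ :=
  bargmannConst * (Real.pi : ℂ)⁻¹ * (f w * Complex.exp (-(‖w‖ : ℂ) ^ 2))

lemma bargmannInv_eq_integral (f : ℂ → ℂ) :
    BargmannInv f = fun x => ∫ w, bargmannKernel (conj w) x * bargmannInvDensity f w := by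
  ext x
  rw [BargmannInv, gaussInt, ← mul_assoc, ← integral_const_mul]
  refine integral_congr_ae (.of_forall fun w => ?_)
  simp only [bargmannInvDensity, bargmannKernel, bargmannConst]
  ring

variable {f : ℂ → ℂ}

lemma integrable_exp_smul_bargmannInvDensity
    (hf : Integrable fun w : ℂ => Real.exp (-‖w‖ ^ 2 / 2) • f w) :
    Integrable fun w : ℂ => Real.exp (‖w‖ ^ 2 / 2) • bargmannInvDensity f w := by
  convert hf.const_mul (bargmannConst * (Real.pi : ℂ)⁻¹) using 2 with w
  have hexp : (Real.exp (-‖w‖ ^ 2 / 2) : ℂ) =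
      (Real.exp (‖w‖ ^ 2 / 2) : ℂ) * Complex.exp (-(‖w‖ : ℂ) ^ 2) := by
    push_cast
    rw [← Complex.exp_add]
    ring_nf
  rw [Complex.real_smul, Complex.real_smul, bargmannInvDensity, hexp]
  ring

lemma integrable_bargmannKernel_mul_bargmannInvDensity
    (hf : Integrable fun w : ℂ => Real.exp (-‖w‖ ^ 2 / 2) • f w) {u : ℂ} (hu : ‖u‖ = 1) :
    Integrable (Function.uncurry fun (x : ℝ) w =>
      bargmannKernel (u * conj w) x * bargmannInvDensity f w) (volume.prod volume) := by
  refine integrable_bargmannKernel_mul_prod (by fun_prop) ?_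
  simpa only [norm_mul, hu, one_mul, RCLike.norm_conj] using
    integrable_exp_smul_bargmannInvDensity hf

lemma frft_bargmannInv {α : ℝ} (hα : Real.sin α ≠ 0)
    (hf : Integrable fun w : ℂ => Real.exp (-‖w‖ ^ 2 / 2) • f w) (x : ℝ) :
    FrFT α (BargmannInv f) x =
      ∫ w, bargmannKernel (Complex.exp (-(I * α)) * conj w) x * bargmannInvDensity f w := by
  have hint := integrable_bargmannKernel_mul_bargmannInvDensity hf norm_one
  simp only [one_mul] at hint
  rw [bargmannInv_eq_integral, frft_integral hint]
  refine integral_congr_ae (.of_forall fun w => ?_)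
  simp only [frft_mul_const, frft_bargmannKernel hα]

end InverseTransform

section Polynomial

lemma integrable_norm_pow_mul_exp_neg_mul_norm_sq {E : Type*} [NormedAddCommGroup E]
    [NormedSpace ℝ E] [FiniteDimensional ℝ E] [Nontrivial E] [MeasurableSpace E] [BorelSpace E]
    (μ : Measure E) [μ.IsAddHaarMeasure] (n : ℕ) {b : ℝ} (hb : 0 < b) :
    Integrable (fun v : E => ‖v‖ ^ n * Real.exp (-b * ‖v‖ ^ 2)) μ := by
  rw [integrable_fun_norm_addHaar μ (f := fun r : ℝ => r ^ n * Real.exp (-b * r ^ 2))]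
  have hradial := integrable_rpow_mul_exp_neg_mul_sq hb
    (neg_one_lt_zero.trans_le (Nat.cast_nonneg (Module.finrank ℝ E - 1 + n)))
  simp only [Real.rpow_natCast] at hradial
  simpa only [smul_eq_mul, ← mul_assoc, ← pow_add] using hradial.integrableOn

lemma integrable_exp_neg_smul_polynomial_eval (p : Polynomial ℂ) :
    Integrable fun w : ℂ => Real.exp (-‖w‖ ^ 2 / 2) • p.eval w := by
  induction p using Polynomial.induction_on' with
  | add p q hp hq =>
    simp only [Polynomial.eval_add, smul_add]
    exact hp.add hq
  | monomial n c =>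
    refine ((integrable_norm_pow_mul_exp_neg_mul_norm_sq volume n one_half_pos).const_mul
      ‖c‖).mono' (by fun_prop) (.of_forall fun w => le_of_eq ?_)
    rw [norm_smul, Real.norm_eq_abs, Real.abs_exp, Polynomial.eval_monomial, norm_mul, norm_pow]
    ring_nf

end Polynomial

theorem bargmann_frac_hilbert_general (α φ : ℝ) (hα : Real.sin α ≠ 0) {f : ℂ → ℂ}
    (hf : Integrable fun w : ℂ => Real.exp (-‖w‖ ^ 2 / 2) • f w) (z : ℂ) :
    Bargmann (fracHilbert α φ (BargmannInv f)) z =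
      ((Real.sqrt Real.pi : ℂ))⁻¹ * gaussInt (fun w =>
        f w * Complex.exp (z * starRingEnd ℂ w) *
          Aphi φ ((Complex.exp (Complex.I * α) * z
            + Complex.exp (-(Complex.I * α)) * starRingEnd ℂ w) / (Real.sqrt 2 : ℂ))) := by
  have hunit : ‖Complex.exp (-(I * α))‖ = 1 := by
    rw [← mul_neg, ← ofReal_neg, norm_exp_I_mul_ofReal]
  have hint : Integrable (Function.uncurry fun (x : ℝ) w => heavisidePhase φ x *
      (bargmannKernel (Complex.exp (-(I * α)) * starRingEnd ℂ w) x * bargmannInvDensity f w))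
      (volume.prod volume) :=
    (integrable_bargmannKernel_mul_bargmannInvDensity hf hunit).bdd_mul
      ((measurable_heavisidePhase φ).comp measurable_fst).aestronglyMeasurable
      (.of_forall fun q => norm_heavisidePhase_le φ q.1)
  have hexponent (w : ℂ) : Complex.exp (-(I * α)) * w * (Complex.exp (I * α) * z) = z * w := by
    rw [mul_mul_mul_comm, ← Complex.exp_add, neg_add_cancel, Complex.exp_zero, one_mul, mul_comm]
  simp_rw [fracHilbert_eq, frft_bargmannInv hα hf, ← integral_const_mul]
  rw [bargmann_frft (by simpa using hα) (by exact hint.integral_prod_left), bargmann_integral hint,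
    ofReal_neg, mul_neg, neg_neg, gaussInt, ← integral_const_mul, ← integral_const_mul]
  refine integral_congr_ae (.of_forall fun w => ?_)
  simp only [← mul_assoc (heavisidePhase _ _), bargmann_mul_const,
    bargmann_heavisidePhase_mul_bargmannKernel, bargmannInvDensity, hexponent,
    add_comm (Complex.exp (I * α) * z)]
  linear_combination (Complex.exp (z * starRingEnd ℂ w) * Aphi φ ((Complex.exp (-(I * α)) *
    starRingEnd ℂ w + Complex.exp (I * α) * z) / (Real.sqrt 2 : ℂ)) * (Real.pi : ℂ)⁻¹ * f w *
    Complex.exp (-(‖w‖ : ℂ) ^ 2)) * bargmannConst_div_sqrt_two_mul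

/-- Under the Bargmann transform, the fractional Hilbert transform H^α_φ becomes the integral
operator f ↦ (1/√π) ∫ f(w) e^{zw̄} A_φ((e^{iα}z + e^{-iα}w̄)/√2) dλ(w). -/
theorem bargmann_frac_hilbert (α φ : ℝ) (hα : Real.sin α ≠ 0) (p : Polynomial ℂ) (f : ℂ → ℂ)
    (hf : ∀ z, f z = p.eval z) (z : ℂ) :
    Bargmann (fracHilbert α φ (BargmannInv f)) z =
      ((Real.sqrt Real.pi : ℂ))⁻¹ * gaussInt (fun w =>
        f w * Complex.exp (z * starRingEnd ℂ w) *
          Aphi φ ((Complex.exp (Complex.I * α) * z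
            + Complex.exp (-(Complex.I * α)) * starRingEnd ℂ w) / (Real.sqrt 2 : ℂ))) := by
  obtain rfl : f = fun w => p.eval w := funext hf
  exact bargmann_frac_hilbert_general α φ hα (integrable_exp_neg_smul_polynomial_eval p) z
end
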